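/- (Existence of the completion of a strong b-metric space) Let (X,d) be a strong b-metric space with constant s ≥ 1. Then there exist a complete strong b-metric space (X̃, d̃) with constant s and a map j : X → X̃ such that d̃(j(x), j(y)) = d(x,y) for all x,y ∈ X and j(X) is dense in X̃, i.e. for every ξ ∈ X̃ there is a sequence (xₙ) in X with d̃(j(xₙ), ξ) → 0. -/

import Mathlib

open Filter

universe u

/-- `d` is a strong b-metric on `X` with constant `s`. -/
def IsStrongBMetric {X : Type u} (s : ℝ) (d : X → X → ℝ) : Prop :=
  (∀ x y, 0 ≤ d x y) ∧ (∀ x y, d x y = 0 ↔ x = y) ∧ (∀ x y, d x y = d y x) ∧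
  (∀ x y z, d x y ≤ d x z + s * d z y)

/-- A sequence is Cauchy for `d` if `d(xₙ,xₘ) → 0` as `n,m → ∞`. -/
def IsBCauchy {X : Type u} (d : X → X → ℝ) (u : ℕ → X) : Prop :=
  ∀ ε : ℝ, 0 < ε → ∃ N : ℕ, ∀ m ≥ N, ∀ n ≥ N, d (u m) (u n) < ε

/-- `d` is complete: every Cauchy sequence converges. -/
def IsBComplete {X : Type u} (d : X → X → ℝ) : Prop :=
  ∀ u : ℕ → X, IsBCauchy d u → ∃ x : X, Tendsto (fun n => d x (u n)) atTop (nhds 0)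

theorem IsStrongBMetric.abs_sub_le {X : Type u} {s : ℝ} {d : X → X → ℝ}
    (hd : IsStrongBMetric s d) (x y x' y' : X) :
    |d x y - d x' y'| ≤ s * d x x' + s * d y y' := by
  obtain ⟨-, -, symm, tri⟩ := hd
  have key : ∀ x y x' y', d x y ≤ d x' y' + s * d y y' + s * d x x' := by
    intro x y x' y'
    have h₁ := tri y x x'
    have h₂ := tri x' y y'
    rw [symm y x, symm y x', symm x' x] at h₁
    rw [symm y' y] at h₂
    linarith
  have h₁ := key x y x' y'
  have h₂ := key x' y' x y
  rw [symm y' y, symm x' x] at h₂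
  rw [_root_.abs_sub_le_iff]
  constructor <;> linarith

theorem IsStrongBMetric.exists_tendsto {X : Type u} {s : ℝ} {d : X → X → ℝ}
    (hs : 1 ≤ s) (hd : IsStrongBMetric s d) {u v : ℕ → X}
    (hu : IsBCauchy d u) (hv : IsBCauchy d v) :
    ∃ l : ℝ, Tendsto (fun n => d (u n) (v n)) atTop (nhds l) := by
  apply cauchySeq_tendsto_of_complete
  rw [Metric.cauchySeq_iff]
  intro ε hε
  have hs₀ : 0 < s := by linarith
  obtain ⟨M, hM⟩ := hu (ε / (2 * s)) (by positivity)
  obtain ⟨N, hN⟩ := hv (ε / (2 * s)) (by positivity)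
  refine ⟨max M N, fun m hm n hn => ?_⟩
  rw [Real.dist_eq]
  have h₁ := hM m (le_of_max_le_left hm) n (le_of_max_le_left hn)
  have h₂ := hN m (le_of_max_le_right hm) n (le_of_max_le_right hn)
  rw [lt_div_iff₀ (by positivity)] at h₁ h₂
  linarith [hd.abs_sub_le (u m) (v m) (u n) (v n)]

/-- Identifying points at distance zero turns a pseudo-version of a strong b-metric into a
strong b-metric. -/
theorem exists_isStrongBMetric_quotient {C : Type u} {s : ℝ} {D : C → C → ℝ}
    (nonneg : ∀ x y, 0 ≤ D x y) (self : ∀ x, D x x = 0) (symm : ∀ x y, D x y = D y x)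
    (tri : ∀ x y z, D x y ≤ D x z + s * D z y) :
    ∃ (Y : Type u) (E : Y → Y → ℝ) (π : C → Y), IsStrongBMetric s E ∧
      Function.Surjective π ∧ ∀ x y, E (π x) (π y) = D x y := by
  have le_of_zero : ∀ {x z}, D x z = 0 → ∀ y, D y x ≤ D y z := by
    intro x z h y
    have := tri y x z
    rw [symm z x, h] at this
    linarith
  have eq_of_zero : ∀ {x z}, D x z = 0 → ∀ y, D y x = D y z := fun {x z} h y =>
    le_antisymm (le_of_zero h y) (le_of_zero (by rw [symm, h]) y)
  let S : Setoid C :=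
    { r := fun x y => D x y = 0
      iseqv := ⟨self, fun {x y} h => by rw [symm, h],
        fun {x y z} h h' => by rw [← eq_of_zero h' x, h]⟩ }
  let E : Quotient S → Quotient S → ℝ := Quotient.lift₂ D (by
    intro a b a' b' ha hb
    rw [eq_of_zero hb a, symm, eq_of_zero ha b', symm])
  refine ⟨Quotient S, E, Quotient.mk S, ⟨?_, ?_, ?_, ?_⟩, Quotient.mk_surjective,
    fun x y => rfl⟩
  · rintro ⟨x⟩ ⟨y⟩
    exact nonneg x y
  · rintro ⟨x⟩ ⟨y⟩
    exact ⟨fun h => Quotient.sound h, fun h => Quotient.exact h⟩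
  · rintro ⟨x⟩ ⟨y⟩
    exact symm x y
  · rintro ⟨x⟩ ⟨y⟩ ⟨z⟩
    exact tri x y z

/-- A strong b-metric space is complete as soon as Cauchy sequences from a dense subspace
converge in it. -/
theorem IsStrongBMetric.isBComplete_of_dense {X Y : Type u} {s : ℝ} {d : X → X → ℝ}
    {D : Y → Y → ℝ} {j : X → Y} (hs : 1 ≤ s) (hD : IsStrongBMetric s D)
    (hj : ∀ x y, D (j x) (j y) = d x y)
    (dense : ∀ ξ, ∃ u : ℕ → X, Tendsto (fun n => D (j (u n)) ξ) atTop (nhds 0))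
    (conv : ∀ u, IsBCauchy d u → ∃ ξ, Tendsto (fun n => D (j (u n)) ξ) atTop (nhds 0)) :
    IsBComplete D := by
  obtain ⟨nonneg, -, symm, tri⟩ := hD
  have hs₀ : 0 < s := by linarith
  intro ξ hξ
  have approx : ∀ n : ℕ, ∃ x, D (j x) (ξ n) < 1 / ((n : ℝ) + 1) := by
    intro n
    obtain ⟨u, hu⟩ := dense (ξ n)
    obtain ⟨k, hk⟩ := (hu.eventually_lt_const
      (show (0 : ℝ) < 1 / ((n : ℝ) + 1) by positivity)).exists
    exact ⟨u k, hk⟩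
  choose x hx using approx
  have hx₀ : Tendsto (fun n => D (j (x n)) (ξ n)) atTop (nhds 0) :=
    squeeze_zero (fun n => nonneg _ _) (fun n => (hx n).le)
      tendsto_one_div_add_atTop_nhds_zero_nat
  have hxC : IsBCauchy d x := by
    intro ε hε
    obtain ⟨M, hM⟩ := hξ (ε / (3 * s ^ 2)) (by positivity)
    obtain ⟨N, hN⟩ := eventually_atTop.1
      (hx₀.eventually_lt_const (show 0 < ε / (3 * s) by positivity))
    refine ⟨max M N, fun m hm n hn => ?_⟩
    have h₁ := hM n (le_of_max_le_left hn) m (le_of_max_le_left hm)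
    have h₂ := hN m (le_of_max_le_right hm)
    have h₃ := hN n (le_of_max_le_right hn)
    rw [lt_div_iff₀ (by positivity)] at h₁ h₂ h₃
    have t₁ := tri (j (x m)) (j (x n)) (ξ m)
    have t₂ := mul_le_mul_of_nonneg_left (tri (j (x n)) (ξ m) (ξ n)) hs₀.le
    have t₃ := mul_le_mul_of_nonneg_left hs (nonneg (j (x m)) (ξ m))
    rw [symm (ξ m) (j (x n)), hj] at t₁
    nlinarith
  obtain ⟨η, hη⟩ := conv x hxC
  refine ⟨η, squeeze_zero (fun n => nonneg _ _) (fun n => ?_)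
    (by simpa using hη.add (hx₀.const_mul s))⟩
  rw [symm (j (x n)) η]
  exact tri _ _ _

/-- **Existence of the completion of a strong b-metric space.** -/
theorem strong_bmetric_completion_exists {X : Type u} [Nonempty X]
    (s : ℝ) (hs : 1 ≤ s) (d : X → X → ℝ) (hd : IsStrongBMetric s d) :
    ∃ (Y : Type u) (D : Y → Y → ℝ) (j : X → Y),
      IsStrongBMetric s D ∧ IsBComplete D ∧
      (∀ x y : X, D (j x) (j y) = d x y) ∧
      (∀ ξ : Y, ∃ u : ℕ → X, Tendsto (fun n => D (j (u n)) ξ) atTop (nhds 0)) := by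
  obtain ⟨nonneg, zero_iff, symm, tri⟩ := id hd
  have hs₀ : 0 < s := by linarith
  have hself : ∀ x, d x x = 0 := fun x => (zero_iff x x).2 rfl
  choose L hL using fun u v : {u : ℕ → X // IsBCauchy d u} =>
    hd.exists_tendsto hs u.2 v.2
  obtain ⟨Y, D, π, hD, hπ, hDπ⟩ := exists_isStrongBMetric_quotient (s := s) (D := L)
    (fun u v => ge_of_tendsto' (hL u v) fun n => nonneg _ _)
    (fun u => tendsto_nhds_unique (hL u u) (by simp [hself]))
    (fun u v => tendsto_nhds_unique (hL u v) (by simpa only [symm] using hL v u))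
    (fun u v w => le_of_tendsto_of_tendsto' (hL u v) ((hL u w).add ((hL w v).const_mul s))
      fun n => tri _ _ _)
  let c : X → {u : ℕ → X // IsBCauchy d u} := fun x =>
    ⟨fun _ => x, fun ε hε => ⟨0, fun m _ n _ => by simpa only [hself] using hε⟩⟩
  have conv : ∀ u : {u : ℕ → X // IsBCauchy d u},
      Tendsto (fun n => D (π (c (u.1 n))) (π u)) atTop (nhds 0) := by
    intro u
    simp only [hDπ]
    rw [Metric.tendsto_atTop]
    intro ε hε
    obtain ⟨N, hN⟩ := u.2 (ε / 2) (by positivity)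
    refine ⟨N, fun n hn => ?_⟩
    have h₀ : 0 ≤ L (c (u.1 n)) u := ge_of_tendsto' (hL _ _) fun m => nonneg _ _
    have h₁ : L (c (u.1 n)) u ≤ ε / 2 := le_of_tendsto (hL _ _)
      (eventually_atTop.2 ⟨N, fun m hm => (hN n hn m hm).le⟩)
    rw [Real.dist_eq, sub_zero, abs_of_nonneg h₀]
    linarith
  have isom : ∀ x y, D (π (c x)) (π (c y)) = d x y := fun x y => by
    rw [hDπ]
    exact tendsto_nhds_unique (hL _ _) tendsto_const_nhds
  have dense : ∀ ξ : Y, ∃ u : ℕ → X,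
      Tendsto (fun n => D (π (c (u n))) ξ) atTop (nhds 0) := fun ξ => by
    obtain ⟨u, rfl⟩ := hπ ξ
    exact ⟨u.1, conv u⟩
  exact ⟨Y, D, fun x => π (c x), hD,
    hD.isBComplete_of_dense hs isom dense fun u hu => ⟨π ⟨u, hu⟩, conv ⟨u, hu⟩⟩, isom, dense⟩
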